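/- P-type setup: let κ₁ < κ₂ < κ₃ < κ₄, a₂₃ = (κ₂+κ₃)/2, a₁₄ = (κ₁+κ₄)/2, c₂₃ = (κ₃−κ₂)²/4, c₁₄ = (κ₄−κ₁)²/4, and let (b₁,b₂) solve b₁ + 2a₂₃b₂ = ω₂₃, b₁ + 2a₁₄b₂ = ω₁₄. Assume 0 < α < min{√c₂₃, c₁₄/(3|a₁₄−a₂₃|), κ₂−κ₁, κ₄−κ₃} (in particular a₁₄ ≠ a₂₃) and α ≠ ±((b₂−3a₁₄)² − c₁₄)/(2(a₁₄−a₂₃)). Set η_I := 2(a₂₃−a₁₄)α, λ_{2,±}(η) := iη(b₂ − 3a₁₄ ± γ_{c₁₄}(±η)) for η = η_R + iη_I, η'₊ := 2(√c₁₄+α)√(α(α + 2a₂₃ − 2κ₁)) and η'₋ := 2(√c₁₄+α)√(α(α + 2κ₄ − 2a₂₃)). Then: (i) Re λ_{2,±}(η_R + iη_I) is an even function of η_R, strictly decreasing for η_R > 0; (ii) Re λ_{2,+}(η'₊ + iη_I) = −(3(a₂₃−κ₁)² + c₂₃)α − 6(a₂₃−κ₁)α² − 2α³ < 0 and Re λ_{2,−}(η'₋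 + iη_I) = −(3(κ₄−a₂₃)² + c₂₃)α − 6(κ₄−a₂₃)α² − 2α³ < 0; (iii) if ±(a₁₄ − a₂₃) > 0 then there exists η̃ ∈ (0, η'_±) with Re λ_{2,±}(η̃ + iη_I) = 0; (iv) λ_{2,±}(η_R + iη_I) ≠ 0 for every η_R ∈ ℝ; (v) (a₁₄ − a₂₃)(Re λ_{2,+}(η_R + iη_I) − Re λ_{2,−}(η_R + iη_I)) > 0 for every η_R ∈ ℝ. -/

import Mathlib

/-- principal square root of c + iμ, μ complex -/
noncomputable def gamC (c : ℝ) (μ : ℂ) : ℂ := ((c : ℂ) + Complex.I * μ) ^ ((1 : ℂ)/2)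

/-- λ₊(η) = iη(b + γ_c(η)) for complex η -/
noncomputable def lamCP (c b : ℝ) (η : ℂ) : ℂ := Complex.I * η * ((b : ℂ) + gamC c η)

/-- λ₋(η) = iη(b − γ_c(−η)) for complex η -/
noncomputable def lamCM (c b : ℝ) (η : ℂ) : ℂ := Complex.I * η * ((b : ℂ) - gamC c (-η))

/-- η_R ↦ Re λ₊(η_R + iη_I) -/
noncomputable def reP (c b ηI : ℝ) (s : ℝ) : ℝ :=
  (lamCP c b ((s : ℂ) + (ηI : ℂ) * Complex.I)).re

/-- η_R ↦ Re λ₋(η_R + iη_I) -/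
noncomputable def reM (c b ηI : ℝ) (s : ℝ) : ℝ :=
  (lamCM c b ((s : ℂ) + (ηI : ℂ) * Complex.I)).re

/-!
Write `γ_c(η_R + iη_I) = u + iv`. Squaring gives `u² - v² = c - η_I` and `2uv = η_R`, so
`Re λ₊ = -η_I (b + u) - η_R v = -η_I b + (2c - 3η_I) u - 2u³`. Here `u` is even in `η_R`, strictly
increasing for `η_R ≥ 0`, and satisfies `u² ≥ max 0 (c - η_I)`, a range in which the cubic is
decreasing whenever `c ≥ 0`. At the endpoint `η'₊` one has `u = √c₁₄ + α`, which gives the negative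
value; at `η_R = 0` the value `-η_I (b + u)` is positive if `η_I < 0`, because `u ≥ √c₁₄ > -b`, so a
zero lies in between. Since `λ₋(η)` is `λ₊(-η)` with `b` replaced by `-b`, the statements on `λ₋`
follow by the reflection `κ ↦ -κ`, and comparing `λ₊` with `λ₋` amounts to comparing the roots at
`η_R ± iη_I`.
-/

section PrincipalRoot

open Complex

theorem gamC_sq (c : ℝ) (μ : ℂ) : gamC c μ ^ 2 = c + I * μ := by
  rw [gamC, one_div]
  exact cpow_nat_inv_pow _ two_ne_zero

theorem ofReal_add_I_mul_eq (c h s : ℝ) :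
    (c : ℂ) + I * (s + h * I) = (c - h : ℝ) + s * I := by
  push_cast
  linear_combination (h : ℂ) * I_sq

theorem gamC_eq_of_sq_sub_sq {c h s u v : ℝ} (hu : 0 < u) (hre : u ^ 2 - v ^ 2 = c - h)
    (him : 2 * u * v = s) : gamC c (s + h * I) = u + v * I := by
  have hsq : (u + v * I : ℂ) ^ 2 = (c - h : ℝ) + s * I := by
    rw [← hre, ← him]
    push_cast
    linear_combination (v : ℂ) ^ 2 * I_sq
  rw [gamC, ofReal_add_I_mul_eq, ← hsq, one_div, sq_cpow_two_inv (by simpa using hu)]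

theorem gamC_re (c h s : ℝ) :
    (gamC c (s + h * I)).re = √((√((c - h) ^ 2 + s ^ 2) + (c - h)) / 2) := by
  rw [gamC, ofReal_add_I_mul_eq, one_div, cpow_inv_two_re, norm_add_mul_I]
  simp

theorem gamC_im_of_nonneg (c h : ℝ) {s : ℝ} (hs : 0 ≤ s) :
    (gamC c (s + h * I)).im = √((√((c - h) ^ 2 + s ^ 2) - (c - h)) / 2) := by
  rw [gamC, ofReal_add_I_mul_eq, one_div, cpow_inv_two_im_eq_sqrt (by simpa using hs),
    norm_add_mul_I]
  simp

theorem gamC_re_nonneg (c h s : ℝ) : 0 ≤ (gamC c (s + h * I)).re := by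
  rw [gamC_re]
  positivity

theorem gamC_re_sq_sub_im_sq (c h s : ℝ) :
    (gamC c (s + h * I)).re ^ 2 - (gamC c (s + h * I)).im ^ 2 = c - h := by
  have hre := congrArg re (gamC_sq c (s + h * I))
  rw [ofReal_add_I_mul_eq, sq, mul_re] at hre
  simpa [sq] using hre

theorem two_mul_gamC_re_mul_im (c h s : ℝ) :
    2 * (gamC c (s + h * I)).re * (gamC c (s + h * I)).im = s := by
  have him := congrArg im (gamC_sq c (s + h * I))
  rw [ofReal_add_I_mul_eq, sq, mul_im] at him
  simp only [add_im, ofReal_im, mul_im, ofReal_re, I_im, I_re] at him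
  linear_combination him

theorem sub_le_gamC_re_sq (c h s : ℝ) : c - h ≤ (gamC c (s + h * I)).re ^ 2 := by
  rw [← gamC_re_sq_sub_im_sq c h s]
  exact sub_le_self _ (sq_nonneg _)

theorem sqrt_sub_le_gamC_re (c h s : ℝ) : √(c - h) ≤ (gamC c (s + h * I)).re :=
  Real.sqrt_le_iff.2 ⟨gamC_re_nonneg c h s, sub_le_gamC_re_sq c h s⟩

theorem strictMonoOn_gamC_re (c h : ℝ) :
    StrictMonoOn (fun s : ℝ ↦ (gamC c (s + h * I)).re) (Set.Ici 0) := by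
  intro s hs t _ hst
  have hsq : s ^ 2 < t ^ 2 := pow_lt_pow_left₀ hst hs two_ne_zero
  have hnorm : √((c - h) ^ 2 + s ^ 2) < √((c - h) ^ 2 + t ^ 2) :=
    Real.sqrt_lt_sqrt (by positivity) (by linarith)
  have habs : |c - h| ≤ √((c - h) ^ 2 + s ^ 2) := Real.abs_le_sqrt (by linarith [sq_nonneg s])
  simp only [gamC_re]
  exact Real.sqrt_lt_sqrt (by linarith [neg_abs_le (c - h)]) (by linarith)

theorem gamC_im_mono (c : ℝ) {h k s : ℝ} (hhk : h ≤ k) (hs : 0 ≤ s) :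
    (gamC c (s + h * I)).im ≤ (gamC c (s + k * I)).im := by
  rw [gamC_im_of_nonneg c h hs, gamC_im_of_nonneg c k hs]
  have htri : √((c - h) ^ 2 + s ^ 2) ≤ √((c - k) ^ 2 + s ^ 2) + (k - h) := by
    calc √((c - h) ^ 2 + s ^ 2) = ‖((c - k : ℝ) + s * I) + (k - h : ℝ)‖ := by
          rw [← norm_add_mul_I]
          congr 1
          push_cast
          ring
      _ ≤ ‖(c - k : ℝ) + s * I‖ + ‖((k - h : ℝ) : ℂ)‖ := norm_add_le _ _
      _ = √((c - k) ^ 2 + s ^ 2) + (k - h) := by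
          rw [norm_add_mul_I, norm_real, Real.norm_of_nonneg (sub_nonneg.2 hhk)]
  exact Real.sqrt_le_sqrt (by linarith)

end PrincipalRoot

section Eigenvalue

open Complex

theorem reP_eq_gamC (c b h s : ℝ) :
    reP c b h s = -h * (b + (gamC c (s + h * I)).re) - s * (gamC c (s + h * I)).im := by
  simp [reP, lamCP]

theorem reP_eq_cubic (c b h s : ℝ) :
    reP c b h s = -h * b + (2 * c - 3 * h) * (gamC c (s + h * I)).re
      - 2 * (gamC c (s + h * I)).re ^ 3 := by
  rw [reP_eq_gamC]
  linear_combination (gamC c (s + h * I)).im * two_mul_gamC_re_mul_im c h s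
    + 2 * (gamC c (s + h * I)).re * gamC_re_sq_sub_im_sq c h s

theorem reP_neg (c b h s : ℝ) : reP c b h (-s) = reP c b h s := by
  rw [reP_eq_cubic, reP_eq_cubic, gamC_re, gamC_re, neg_sq]

theorem continuous_reP (c b h : ℝ) : Continuous (reP c b h) := by
  simp only [funext (reP_eq_cubic c b h), gamC_re]
  fun_prop

theorem strictAntiOn_reP {c : ℝ} (hc : 0 ≤ c) (b h : ℝ) :
    StrictAntiOn (reP c b h) (Set.Ici 0) := by
  intro s hs t ht hst
  have hux : (gamC c (s + h * I)).re < (gamC c (t + h * I)).re :=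
    strictMonoOn_gamC_re c h hs ht hst
  have hu := gamC_re_nonneg c h s
  have hu_sq := sub_le_gamC_re_sq c h s
  rw [reP_eq_cubic, reP_eq_cubic]
  generalize (gamC c (s + h * I)).re = u at *
  generalize (gamC c (t + h * I)).re = x at *
  have hquad : 3 * u ^ 2 < u ^ 2 + u * x + x ^ 2 := by nlinarith
  have hslope : 0 < 2 * (u ^ 2 + u * x + x ^ 2) - (2 * c - 3 * h) := by linarith [sq_nonneg u]
  linear_combination mul_pos (sub_pos.2 hux) hslope

theorem reP_zero_pos {c b h : ℝ} (hh : h < 0) (hb : 0 < b + √c) : 0 < reP c b h 0 := by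
  have hu : √c ≤ (gamC c ((0 : ℝ) + h * I)).re :=
    (Real.sqrt_le_sqrt (by linarith)).trans (sqrt_sub_le_gamC_re c h 0)
  rw [reP_eq_gamC, zero_mul, sub_zero]
  exact mul_pos (neg_pos.2 hh) (by linarith)

theorem lamCP_ne_zero {c b : ℝ} {η : ℂ} (hη : η.im ≠ 0) (hb : b ^ 2 ≠ c - η.im) :
    lamCP c b η ≠ 0 := by
  have hη0 : η ≠ 0 := fun h ↦ hη (by rw [h, zero_im])
  refine mul_ne_zero (mul_ne_zero I_ne_zero hη0) fun hroot ↦ hb ?_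
  have hsq : (b : ℂ) ^ 2 = c + I * η := by
    rw [← gamC_sq, eq_neg_of_add_eq_zero_left hroot, neg_sq]
  simpa [sq, sub_eq_add_neg] using congrArg re hsq

theorem lamCM_eq_lamCP_neg (c b : ℝ) (η : ℂ) : lamCM c b η = lamCP c (-b) (-η) := by
  simp only [lamCM, lamCP, ofReal_neg]
  ring

theorem reM_eq_reP_neg (c b h s : ℝ) : reM c b h s = reP c (-b) (-h) s := by
  rw [← reP_neg, reM, reP, lamCM_eq_lamCP_neg]
  congr 2
  push_cast
  ring

theorem reM_neg (c b h s : ℝ) : reM c b h (-s) = reM c b h s := by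
  simp only [reM_eq_reP_neg, reP_neg]

theorem strictAntiOn_reM {c : ℝ} (hc : 0 ≤ c) (b h : ℝ) :
    StrictAntiOn (reM c b h) (Set.Ici 0) := by
  rw [funext (reM_eq_reP_neg c b h)]
  exact strictAntiOn_reP hc (-b) (-h)

theorem reM_lt_reP {c h : ℝ} (hc : 0 ≤ c) (hh : h < 0) (b s : ℝ) :
    reM c b h s < reP c b h s := by
  wlog hs : 0 ≤ s generalizing s
  · simpa only [reM_neg, reP_neg] using this (-s) (by linarith)
  have hu : 0 < (gamC c (s + h * I)).re :=
    (Real.sqrt_pos.2 (by linarith)).trans_le (sqrt_sub_le_gamC_re c h s)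
  have hx := gamC_re_nonneg c (-h) s
  have hvy := gamC_im_mono c (show h ≤ -h by linarith) hs
  rw [reM_eq_reP_neg, reP_eq_gamC, reP_eq_gamC]
  linear_combination mul_pos (neg_pos.2 hh) (add_pos_of_pos_of_nonneg hu hx)
    + mul_le_mul_of_nonneg_left hvy hs

theorem reP_lt_reM {c h : ℝ} (hc : 0 ≤ c) (hh : 0 < h) (b s : ℝ) :
    reP c b h s < reM c b h s := by
  simpa only [reM_eq_reP_neg, neg_neg] using reM_lt_reP hc (neg_lt_zero.2 hh) (-b) s

theorem sub_mul_reP_sub_reM_pos {c a a' α : ℝ} (hc : 0 ≤ c) (ha : a ≠ a') (hα : 0 < α)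
    (b s : ℝ) :
    0 < (a - a') * (reP c b (2 * (a' - a) * α) s - reM c b (2 * (a' - a) * α) s) := by
  rcases ha.lt_or_gt with hlt | hgt
  · have hh : 0 < 2 * (a' - a) * α := mul_pos (by linarith) hα
    exact mul_pos_of_neg_of_neg (sub_neg.2 hlt) (sub_neg.2 (reP_lt_reM hc hh b s))
  · have hh : 2 * (a' - a) * α < 0 := mul_neg_of_neg_of_pos (by linarith) hα
    exact mul_pos (sub_pos.2 hgt) (sub_pos.2 (reM_lt_reP hc hh b s))

end Eigenvalue

section NestedSolitons

variable {κ a₂₃ a₁₄ c₂₃ c₁₄ b b₁ b₂ α : ℝ}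

-- The right-hand sides are `ω₂₃` and `ω₁₄`, since `ω_{ij} = 3 a_{ij}² + c_{ij}`.
theorem two_mul_sub_mul_velocity_eq (h₂₃ : b₁ + 2 * a₂₃ * b₂ = 3 * a₂₃ ^ 2 + c₂₃)
    (h₁₄ : b₁ + 2 * a₁₄ * b₂ = 3 * a₁₄ ^ 2 + c₁₄) :
    2 * (a₁₄ - a₂₃) * (b₂ - 3 * a₁₄) = c₁₄ - c₂₃ - 3 * (a₁₄ - a₂₃) ^ 2 := by
  linear_combination h₁₄ - h₂₃

theorem endpoint_value_neg {p c : ℝ} (hp : 0 ≤ p) (hc : 0 ≤ c) (hα : 0 < α) :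
    -(3 * p ^ 2 + c) * α - 6 * p * α ^ 2 - 2 * α ^ 3 < 0 := by
  have hsum : 0 < (3 * p ^ 2 + c) * α + 6 * p * α ^ 2 + 2 * α ^ 3 := by positivity
  linarith

theorem reP_endpoint (hc₁₄ : 0 ≤ c₁₄) (hκ : √c₁₄ = a₁₄ - κ) (hκa : κ ≤ a₂₃)
    (hb : 2 * (a₁₄ - a₂₃) * b = c₁₄ - c₂₃ - 3 * (a₁₄ - a₂₃) ^ 2) (hα : 0 < α) :
    reP c₁₄ b (2 * (a₂₃ - a₁₄) * α) (2 * (√c₁₄ + α) * √(α * (α + 2 * a₂₃ - 2 * κ)))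
      = -(3 * (a₂₃ - κ) ^ 2 + c₂₃) * α - 6 * (a₂₃ - κ) * α ^ 2 - 2 * α ^ 3 := by
  have hm := Real.sq_sqrt hc₁₄
  have hv := Real.sq_sqrt (show 0 ≤ α * (α + 2 * a₂₃ - 2 * κ) from
    mul_nonneg hα.le (by linarith))
  have hγ := gamC_eq_of_sq_sub_sq (c := c₁₄) (h := 2 * (a₂₃ - a₁₄) * α) (u := √c₁₄ + α)
    (v := √(α * (α + 2 * a₂₃ - 2 * κ))) (by positivity)
    (by linear_combination hm - hv + 2 * α * hκ) rfl
  rw [reP_eq_cubic, hγ]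
  simp only [Complex.add_re, Complex.ofReal_re, Complex.re_ofReal_mul, Complex.I_re, mul_zero,
    add_zero]
  obtain rfl : κ = a₁₄ - √c₁₄ := by linarith
  linear_combination α * hb - (2 * √c₁₄ + 3 * α) * hm

theorem reM_endpoint (hc₁₄ : 0 ≤ c₁₄) (hκ : √c₁₄ = κ - a₁₄) (hκa : a₂₃ ≤ κ)
    (hb : 2 * (a₁₄ - a₂₃) * b = c₁₄ - c₂₃ - 3 * (a₁₄ - a₂₃) ^ 2) (hα : 0 < α) :
    reM c₁₄ b (2 * (a₂₃ - a₁₄) * α) (2 * (√c₁₄ + α) * √(α * (α + 2 * κ - 2 * a₂₃)))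
      = -(3 * (κ - a₂₃) ^ 2 + c₂₃) * α - 6 * (κ - a₂₃) * α ^ 2 - 2 * α ^ 3 := by
  have hreflected := reP_endpoint (κ := -κ) (a₂₃ := -a₂₃) (a₁₄ := -a₁₄) (c₂₃ := c₂₃) (b := -b)
    hc₁₄ (by linarith) (neg_le_neg hκa) (by linear_combination hb) hα
  rw [reM_eq_reP_neg]
  convert hreflected using 1 <;> ring_nf

theorem add_sqrt_pos_of_nested (hc₁₄ : 0 ≤ c₁₄) (hκ : √c₁₄ = a₁₄ - κ) (hκa : κ < a₂₃)
    (ha : a₂₃ < a₁₄) (hnested : c₂₃ ≤ (a₂₃ - κ) ^ 2)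
    (hb : 2 * (a₁₄ - a₂₃) * b = c₁₄ - c₂₃ - 3 * (a₁₄ - a₂₃) ^ 2) : 0 < b + √c₁₄ := by
  have hfactor : 2 * (a₁₄ - a₂₃) * (b + √c₁₄)
      = (a₂₃ - κ) ^ 2 - c₂₃ + 4 * (a₂₃ - κ) * (a₁₄ - a₂₃) := by
    linear_combination hb - Real.sq_sqrt hc₁₄
      + (√c₁₄ + a₁₄ - κ + 2 * (a₁₄ - a₂₃)) * hκ
  refine pos_of_mul_pos_right (a := 2 * (a₁₄ - a₂₃)) ?_ (by linarith)
  rw [hfactor]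
  linarith [mul_pos (sub_pos.2 hκa) (sub_pos.2 ha)]

theorem exists_reP_eq_zero (hc₁₄ : 0 ≤ c₁₄) (hc₂₃ : 0 ≤ c₂₃) (hκ : √c₁₄ = a₁₄ - κ) (hκa : κ < a₂₃)
    (ha : a₂₃ < a₁₄) (hnested : c₂₃ ≤ (a₂₃ - κ) ^ 2)
    (hb : 2 * (a₁₄ - a₂₃) * b = c₁₄ - c₂₃ - 3 * (a₁₄ - a₂₃) ^ 2) (hα : 0 < α) :
    ∃ s ∈ Set.Ioo 0 (2 * (√c₁₄ + α) * √(α * (α + 2 * a₂₃ - 2 * κ))),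
      reP c₁₄ b (2 * (a₂₃ - a₁₄) * α) s = 0 := by
  have hh : 2 * (a₂₃ - a₁₄) * α < 0 := mul_neg_of_neg_of_pos (by linarith) hα
  refine intermediate_value_Ioo' (by positivity) (continuous_reP _ _ _).continuousOn
    ⟨?_, reP_zero_pos hh (add_sqrt_pos_of_nested hc₁₄ hκ hκa ha hnested hb)⟩
  rw [reP_endpoint hc₁₄ hκ hκa.le hb hα]
  exact endpoint_value_neg (sub_nonneg.2 hκa.le) hc₂₃ hα

theorem exists_reM_eq_zero (hc₁₄ : 0 ≤ c₁₄) (hc₂₃ : 0 ≤ c₂₃) (hκ : √c₁₄ = κ - a₁₄) (hκa : a₂₃ < κ)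
    (ha : a₁₄ < a₂₃) (hnested : c₂₃ ≤ (κ - a₂₃) ^ 2)
    (hb : 2 * (a₁₄ - a₂₃) * b = c₁₄ - c₂₃ - 3 * (a₁₄ - a₂₃) ^ 2) (hα : 0 < α) :
    ∃ s ∈ Set.Ioo 0 (2 * (√c₁₄ + α) * √(α * (α + 2 * κ - 2 * a₂₃))),
      reM c₁₄ b (2 * (a₂₃ - a₁₄) * α) s = 0 := by
  have hreflected := exists_reP_eq_zero (κ := -κ) (a₂₃ := -a₂₃) (a₁₄ := -a₁₄) (b := -b) hc₁₄ hc₂₃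
    (by linarith) (neg_lt_neg hκa) (neg_lt_neg ha) (by linear_combination hnested)
    (by linear_combination hb) hα
  simp only [reM_eq_reP_neg]
  convert hreflected using 5 <;> ring_nf

theorem lamCP_weighted_ne_zero (ha : a₁₄ ≠ a₂₃) (hα : α ≠ 0)
    (hb : α ≠ (b ^ 2 - c₁₄) / (2 * (a₁₄ - a₂₃))) (s : ℝ) :
    lamCP c₁₄ b (s + (2 * (a₂₃ - a₁₄) * α : ℝ) * Complex.I) ≠ 0 := by
  have hd : a₁₄ - a₂₃ ≠ 0 := sub_ne_zero.2 ha
  have him : ((s : ℂ) + (2 * (a₂₃ - a₁₄) * α : ℝ) * Complex.I).im = 2 * (a₂₃ - a₁₄) * α := by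
    simp
  refine lamCP_ne_zero ?_ fun h ↦ hb ?_
  · rw [him]
    exact mul_ne_zero (mul_ne_zero two_ne_zero (sub_ne_zero.2 ha.symm)) hα
  · rw [him] at h
    rw [eq_div_iff (mul_ne_zero two_ne_zero hd), h]
    ring

theorem lamCM_weighted_ne_zero (ha : a₁₄ ≠ a₂₃) (hα : α ≠ 0)
    (hb : α ≠ -((b ^ 2 - c₁₄) / (2 * (a₁₄ - a₂₃)))) (s : ℝ) :
    lamCM c₁₄ b (s + (2 * (a₂₃ - a₁₄) * α : ℝ) * Complex.I) ≠ 0 := by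
  have hreflected := lamCP_weighted_ne_zero (a₁₄ := a₁₄) (a₂₃ := a₂₃) (b := -b) (c₁₄ := c₁₄)
    (α := -α) ha (neg_ne_zero.2 hα) (by rwa [neg_sq, Ne, neg_eq_iff_eq_neg]) (-s)
  rw [lamCM_eq_lamCP_neg]
  convert hreflected using 2
  push_cast
  ring

end NestedSolitons

theorem resonant_eigenvalues_14_soliton_P_general
    (κ₁ κ₂ κ₃ κ₄ a₂₃ a₁₄ c₂₃ c₁₄ ω₂₃ ω₁₄ b₁ b₂ α : ℝ)
    (h12 : κ₁ < κ₂) (h23 : κ₂ < κ₃) (h34 : κ₃ < κ₄)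
    (ha23 : a₂₃ = (κ₂ + κ₃) / 2) (ha14 : a₁₄ = (κ₁ + κ₄) / 2)
    (hc23 : c₂₃ = (κ₃ - κ₂) ^ 2 / 4) (hc14 : c₁₄ = (κ₄ - κ₁) ^ 2 / 4)
    (hω23 : ω₂₃ = κ₂ ^ 2 + κ₂ * κ₃ + κ₃ ^ 2) (hω14 : ω₁₄ = κ₁ ^ 2 + κ₁ * κ₄ + κ₄ ^ 2)
    (hb1 : b₁ + 2 * a₂₃ * b₂ = ω₂₃) (hb2 : b₁ + 2 * a₁₄ * b₂ = ω₁₄)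
    (ha : a₁₄ ≠ a₂₃) (hα0 : 0 < α)
    (hα5 : α ≠ ((b₂ - 3 * a₁₄) ^ 2 - c₁₄) / (2 * (a₁₄ - a₂₃)))
    (hα6 : α ≠ -(((b₂ - 3 * a₁₄) ^ 2 - c₁₄) / (2 * (a₁₄ - a₂₃)))) :
    ((∀ ηR : ℝ,
        reP c₁₄ (b₂ - 3 * a₁₄) (2 * (a₂₃ - a₁₄) * α) (-ηR)
          = reP c₁₄ (b₂ - 3 * a₁₄) (2 * (a₂₃ - a₁₄) * α) ηR
        ∧ reM c₁₄ (b₂ - 3 * a₁₄) (2 * (a₂₃ - a₁₄) * α) (-ηR)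
          = reM c₁₄ (b₂ - 3 * a₁₄) (2 * (a₂₃ - a₁₄) * α) ηR)
      ∧ StrictAntiOn (reP c₁₄ (b₂ - 3 * a₁₄) (2 * (a₂₃ - a₁₄) * α)) (Set.Ioi 0)
      ∧ StrictAntiOn (reM c₁₄ (b₂ - 3 * a₁₄) (2 * (a₂₃ - a₁₄) * α)) (Set.Ioi 0))
    ∧ (reP c₁₄ (b₂ - 3 * a₁₄) (2 * (a₂₃ - a₁₄) * α)
          (2 * (√c₁₄ + α) * √(α * (α + 2 * a₂₃ - 2 * κ₁)))
        = -(3 * (a₂₃ - κ₁) ^ 2 + c₂₃) * α - 6 * (a₂₃ - κ₁) * α ^ 2 - 2 * α ^ 3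
      ∧ reP c₁₄ (b₂ - 3 * a₁₄) (2 * (a₂₃ - a₁₄) * α)
          (2 * (√c₁₄ + α) * √(α * (α + 2 * a₂₃ - 2 * κ₁))) < 0
      ∧ reM c₁₄ (b₂ - 3 * a₁₄) (2 * (a₂₃ - a₁₄) * α)
          (2 * (√c₁₄ + α) * √(α * (α + 2 * κ₄ - 2 * a₂₃)))
        = -(3 * (κ₄ - a₂₃) ^ 2 + c₂₃) * α - 6 * (κ₄ - a₂₃) * α ^ 2 - 2 * α ^ 3
      ∧ reM c₁₄ (b₂ - 3 * a₁₄) (2 * (a₂₃ - a₁₄) * α)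
          (2 * (√c₁₄ + α) * √(α * (α + 2 * κ₄ - 2 * a₂₃))) < 0)
    ∧ ((0 < a₁₄ - a₂₃ →
          ∃ ηs ∈ Set.Ioo (0 : ℝ)
              (2 * (√c₁₄ + α) * √(α * (α + 2 * a₂₃ - 2 * κ₁))),
            reP c₁₄ (b₂ - 3 * a₁₄) (2 * (a₂₃ - a₁₄) * α) ηs = 0)
      ∧ (a₁₄ - a₂₃ < 0 →
          ∃ ηs ∈ Set.Ioo (0 : ℝ)
              (2 * (√c₁₄ + α) * √(α * (α + 2 * κ₄ - 2 * a₂₃))),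
            reM c₁₄ (b₂ - 3 * a₁₄) (2 * (a₂₃ - a₁₄) * α) ηs = 0))
    ∧ (∀ ηR : ℝ,
        lamCP c₁₄ (b₂ - 3 * a₁₄) ((ηR : ℂ) + (2 * (a₂₃ - a₁₄) * α : ℝ) * Complex.I) ≠ 0
        ∧ lamCM c₁₄ (b₂ - 3 * a₁₄) ((ηR : ℂ) + (2 * (a₂₃ - a₁₄) * α : ℝ) * Complex.I) ≠ 0)
    ∧ (∀ ηR : ℝ,
        0 < (a₁₄ - a₂₃) * (reP c₁₄ (b₂ - 3 * a₁₄) (2 * (a₂₃ - a₁₄) * α) ηR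
            - reM c₁₄ (b₂ - 3 * a₁₄) (2 * (a₂₃ - a₁₄) * α) ηR)) := by
  have hb : 2 * (a₁₄ - a₂₃) * (b₂ - 3 * a₁₄) = c₁₄ - c₂₃ - 3 * (a₁₄ - a₂₃) ^ 2 :=
    two_mul_sub_mul_velocity_eq (by rw [hb1, hω23, ha23, hc23]; ring)
      (by rw [hb2, hω14, ha14, hc14]; ring)
  have hc₁₄ : 0 ≤ c₁₄ := hc14 ▸ by positivity
  have hc₂₃ : 0 ≤ c₂₃ := hc23 ▸ by positivity
  have hsqrt : √c₁₄ = (κ₄ - κ₁) / 2 := by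
    rw [hc14, show (κ₄ - κ₁) ^ 2 / 4 = ((κ₄ - κ₁) / 2) ^ 2 by ring, Real.sqrt_sq (by linarith)]
  have hκ₁ : √c₁₄ = a₁₄ - κ₁ := by linarith
  have hκ₄ : √c₁₄ = κ₄ - a₁₄ := by linarith
  have hleft : κ₁ < a₂₃ := by linarith
  have hright : a₂₃ < κ₄ := by linarith
  have hnested₁ : c₂₃ ≤ (a₂₃ - κ₁) ^ 2 := by rw [hc23]; nlinarith
  have hnested₄ : c₂₃ ≤ (κ₄ - a₂₃) ^ 2 := by rw [hc23]; nlinarith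
  have hendP := reP_endpoint hc₁₄ hκ₁ hleft.le hb hα0
  have hendM := reM_endpoint hc₁₄ hκ₄ hright.le hb hα0
  exact ⟨⟨fun ηR ↦ ⟨reP_neg _ _ _ ηR, reM_neg _ _ _ ηR⟩,
      (strictAntiOn_reP hc₁₄ _ _).mono Set.Ioi_subset_Ici_self,
      (strictAntiOn_reM hc₁₄ _ _).mono Set.Ioi_subset_Ici_self⟩,
    ⟨hendP, hendP.trans_lt (endpoint_value_neg (sub_nonneg.2 hleft.le) hc₂₃ hα0),
      hendM, hendM.trans_lt (endpoint_value_neg (sub_nonneg.2 hright.le) hc₂₃ hα0)⟩,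
    ⟨fun h ↦ exists_reP_eq_zero hc₁₄ hc₂₃ hκ₁ hleft (sub_pos.1 h) hnested₁ hb hα0,
      fun h ↦ exists_reM_eq_zero hc₁₄ hc₂₃ hκ₄ hright (sub_neg.1 h) hnested₄ hb hα0⟩,
    fun ηR ↦ ⟨lamCP_weighted_ne_zero ha hα0.ne' hα5 ηR, lamCM_weighted_ne_zero ha hα0.ne' hα6 ηR⟩,
    sub_mul_reP_sub_reM_pos hc₁₄ ha hα0 _⟩

/-- resonant continuous eigenvalues λ_{2,±}(η_R + iη_I)
associated with the [1,4]-soliton of a P-type 2-line soliton, viewed in the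
weighted space with weight e^{2αz₁}. -/
theorem resonant_eigenvalues_14_soliton_P
    (κ₁ κ₂ κ₃ κ₄ a₂₃ a₁₄ c₂₃ c₁₄ ω₂₃ ω₁₄ b₁ b₂ α : ℝ)
    (h12 : κ₁ < κ₂) (h23 : κ₂ < κ₃) (h34 : κ₃ < κ₄)
    (ha23 : a₂₃ = (κ₂ + κ₃)/2) (ha14 : a₁₄ = (κ₁ + κ₄)/2)
    (hc23 : c₂₃ = (κ₃ - κ₂)^2/4) (hc14 : c₁₄ = (κ₄ - κ₁)^2/4)
    (hω23 : ω₂₃ = κ₂^2 + κ₂*κ₃ + κ₃^2) (hω14 : ω₁₄ = κ₁^2 + κ₁*κ₄ + κ₄^2)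
    (hb1 : b₁ + 2*a₂₃*b₂ = ω₂₃) (hb2 : b₁ + 2*a₁₄*b₂ = ω₁₄)
    (hα0 : 0 < α) (hα1 : α < Real.sqrt c₂₃)
    (hα2 : α < c₁₄/(3*|a₁₄ - a₂₃|))
    (hα3 : α < κ₂ - κ₁) (hα4 : α < κ₄ - κ₃)
    (hα5 : α ≠ ((b₂ - 3*a₁₄)^2 - c₁₄)/(2*(a₁₄ - a₂₃)))
    (hα6 : α ≠ -(((b₂ - 3*a₁₄)^2 - c₁₄)/(2*(a₁₄ - a₂₃)))) :
    ((∀ ηR : ℝ,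
        reP c₁₄ (b₂ - 3*a₁₄) (2*(a₂₃ - a₁₄)*α) (-ηR)
          = reP c₁₄ (b₂ - 3*a₁₄) (2*(a₂₃ - a₁₄)*α) ηR
        ∧ reM c₁₄ (b₂ - 3*a₁₄) (2*(a₂₃ - a₁₄)*α) (-ηR)
          = reM c₁₄ (b₂ - 3*a₁₄) (2*(a₂₃ - a₁₄)*α) ηR)
      ∧ StrictAntiOn (reP c₁₄ (b₂ - 3*a₁₄) (2*(a₂₃ - a₁₄)*α)) (Set.Ioi 0)
      ∧ StrictAntiOn (reM c₁₄ (b₂ - 3*a₁₄) (2*(a₂₃ - a₁₄)*α)) (Set.Ioi 0))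
    ∧ (reP c₁₄ (b₂ - 3*a₁₄) (2*(a₂₃ - a₁₄)*α)
          (2*(Real.sqrt c₁₄ + α)*Real.sqrt (α*(α + 2*a₂₃ - 2*κ₁)))
        = -(3*(a₂₃ - κ₁)^2 + c₂₃)*α - 6*(a₂₃ - κ₁)*α^2 - 2*α^3
      ∧ reP c₁₄ (b₂ - 3*a₁₄) (2*(a₂₃ - a₁₄)*α)
          (2*(Real.sqrt c₁₄ + α)*Real.sqrt (α*(α + 2*a₂₃ - 2*κ₁))) < 0
      ∧ reM c₁₄ (b₂ - 3*a₁₄) (2*(a₂₃ - a₁₄)*α)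
          (2*(Real.sqrt c₁₄ + α)*Real.sqrt (α*(α + 2*κ₄ - 2*a₂₃)))
        = -(3*(κ₄ - a₂₃)^2 + c₂₃)*α - 6*(κ₄ - a₂₃)*α^2 - 2*α^3
      ∧ reM c₁₄ (b₂ - 3*a₁₄) (2*(a₂₃ - a₁₄)*α)
          (2*(Real.sqrt c₁₄ + α)*Real.sqrt (α*(α + 2*κ₄ - 2*a₂₃))) < 0)
    ∧ ((0 < a₁₄ - a₂₃ →
          ∃ ηs ∈ Set.Ioo (0:ℝ)
              (2*(Real.sqrt c₁₄ + α)*Real.sqrt (α*(α + 2*a₂₃ - 2*κ₁))),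
            reP c₁₄ (b₂ - 3*a₁₄) (2*(a₂₃ - a₁₄)*α) ηs = 0)
      ∧ (a₁₄ - a₂₃ < 0 →
          ∃ ηs ∈ Set.Ioo (0:ℝ)
              (2*(Real.sqrt c₁₄ + α)*Real.sqrt (α*(α + 2*κ₄ - 2*a₂₃))),
            reM c₁₄ (b₂ - 3*a₁₄) (2*(a₂₃ - a₁₄)*α) ηs = 0))
    ∧ (∀ ηR : ℝ,
        lamCP c₁₄ (b₂ - 3*a₁₄) ((ηR : ℂ) + (2*(a₂₃ - a₁₄)*α : ℝ) * Complex.I) ≠ 0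
        ∧ lamCM c₁₄ (b₂ - 3*a₁₄) ((ηR : ℂ) + (2*(a₂₃ - a₁₄)*α : ℝ) * Complex.I) ≠ 0)
    ∧ (∀ ηR : ℝ,
        0 < (a₁₄ - a₂₃) *
          (reP c₁₄ (b₂ - 3*a₁₄) (2*(a₂₃ - a₁₄)*α) ηR
            - reM c₁₄ (b₂ - 3*a₁₄) (2*(a₂₃ - a₁₄)*α) ηR)) := by
  have ha : a₁₄ ≠ a₂₃ := by
    rintro rfl
    simp only [sub_self, abs_zero, mul_zero, div_zero] at hα2
    exact hα0.not_gt hα2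
  exact resonant_eigenvalues_14_soliton_P_general κ₁ κ₂ κ₃ κ₄ a₂₃ a₁₄ c₂₃ c₁₄ ω₂₃ ω₁₄ b₁ b₂ α
    h12 h23 h34 ha23 ha14 hc23 hc14 hω23 hω14 hb1 hb2 ha hα0 hα5 hα6
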